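/- The function δ ↦ α_c^1(δ) is continuous and strictly decreasing on (0,∞), uniformly continuous on [δ₀,∞) for every δ₀>0, and lim_{δ→∞} α_c^1(δ)=0. -/

import Mathlib

open scoped BigOperators Classical ENNReal
open Filter Topology

noncomputable section
namespace ORRW

/-- Probability measures on a finite type `A`, topologized as a subset of `ℝ^A`. -/
abbrev ProbMeas (A : Type) [Fintype A] : Type :=
  {p : A → ℝ // (∀ a, 0 ≤ p a) ∧ ∑ a, p a = 1}

/-- Relative entropy `R(γ‖ρ)` between two finitely supported "rows", valued in `EReal`,
with `+∞` when absolute continuity fails. -/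
def relEnt {A : Type} [Fintype A] (γ ρ : A → ℝ) : EReal :=
  if ∀ a, ρ a = 0 → γ a = 0 then ((∑ a, γ a * Real.log (γ a / ρ a) : ℝ) : EReal)
  else (⊤ : EReal)

/-- `∫ R(q‖p) dν = Σ_a ν(a) · R(q(a,·)‖p(a,·))`. -/
def relEntInt {A : Type} [Fintype A] (ν : A → ℝ) (q p : A → A → ℝ) : EReal :=
  ∑ a, (ν a : EReal) * relEnt (q a) (p a)

/-- `ν` is an invariant measure of the kernel `q`. -/
def Invariant {A : Type} [Fintype A] (ν : A → ℝ) (q : A → A → ℝ) : Prop :=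
  ∀ y, ∑ x, ν x * q x y = ν y

/-- Extended-real logarithm: `⊥` at nonpositive arguments. -/
def elog (x : ℝ) : EReal := if x ≤ 0 then (⊥ : EReal) else ((Real.log x : ℝ) : EReal)

/-- Empirical measure of a finite trajectory `f : Fin (n+1) → A`. -/
def empMeas {A : Type} [Fintype A] [DecidableEq A] (n : ℕ) (f : Fin (n + 1) → A) :
    ProbMeas A :=
  ⟨fun a => ((Finset.univ.filter (fun i => f i = a)).card : ℝ) / (n + 1),
    fun a => by positivity, by
      have key : ∑ a : A, ((Finset.univ.filter (fun i => f i = a)).card) = n + 1 := by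
        have h := Finset.card_eq_sum_card_fiberwise
          (s := (Finset.univ : Finset (Fin (n + 1)))) (t := (Finset.univ : Finset A))
          (f := f) (fun i _ => Finset.mem_univ (f i))
        simpa using h.symm
      have key' : ∑ a : A, (((Finset.univ.filter (fun i => f i = a)).card : ℝ)) = (n : ℝ) + 1 := by
        have h2 := congrArg (fun m : ℕ => (m : ℝ)) key
        push_cast at h2
        simpa using h2
      rw [← Finset.sum_div, key', div_self (by positivity)]⟩

section Graph

variable {V : Type} [Fintype V] [DecidableEq V]

/-- Weight of an edge given the set `F` of already traversed edges. -/
def gw (δ : ℝ) (F : Finset (Sym2 V)) (e : Sym2 V) : ℝ := if e ∈ F then δ else 1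

/-- The transition kernel `p̂_F` on `V`. -/
def phat (G : SimpleGraph V) [DecidableRel G.Adj] (δ : ℝ) (F : Finset (Sym2 V))
    (x y : V) : ℝ :=
  if G.Adj x y then gw δ F s(x, y) / ∑ z ∈ G.neighborFinset x, gw δ F s(x, z) else 0

/-- Two edges are adjacent iff they share a vertex. -/
def edgeAdj (e e' : Sym2 V) : Prop := ∃ v, v ∈ e ∧ v ∈ e'

/-- `x` is a vertex of the edge set `F`. -/
def memVerts (F : Finset (Sym2 V)) (x : V) : Prop := ∃ e ∈ F, x ∈ e

/-- `𝒯_G`: stochastic matrices on `V` adapted to `G`. -/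
def TG (G : SimpleGraph V) : Set (V → V → ℝ) :=
  {q | (∀ x y, 0 ≤ q x y) ∧ (∀ x, ∑ y, q x y = 1) ∧ ∀ x y, q x y ≠ 0 → G.Adj x y}

/-- `𝒯(F)`: stochastic kernels from the vertex set of `F` to `V`, supported on `F`. -/
def TE (F : Finset (Sym2 V)) : Set (V → V → ℝ) :=
  {q | (∀ x y, 0 ≤ q x y) ∧ (∀ x, memVerts F x → ∑ y, q x y = 1) ∧
    ∀ x y, q x y ≠ 0 → s(x, y) ∈ F}

/-- `ℰ`: admissible increasing sequences of traversed edge sets. -/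
def seqE (G : SimpleGraph V) [DecidableRel G.Adj] (v₁ : V) :
    Set (Fin G.edgeFinset.card → Finset (Sym2 V)) :=
  {Es | (∀ k, Es k ⊆ G.edgeFinset) ∧ (∀ k, (Es k).card = (k : ℕ) + 1) ∧
    (∀ k l : Fin G.edgeFinset.card, (k : ℕ) + 1 = (l : ℕ) → Es k ⊂ Es l) ∧
    (∀ k : Fin G.edgeFinset.card, (k : ℕ) = 0 → ∃ e ∈ Es k, v₁ ∈ e) ∧
    (∀ k l : Fin G.edgeFinset.card, (k : ℕ) + 1 = (l : ℕ) →
      ∀ e ∈ Es l \ Es k, ∃ e' ∈ Es k, edgeAdj e e')}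

/-- The rate function `I_δ`. -/
def Ifun (G : SimpleGraph V) [DecidableRel G.Adj] (v₁ : V) (δ : ℝ) (ν : ProbMeas V) : EReal :=
  sInf { c : EReal |
    ∃ (νs : Fin G.edgeFinset.card → ProbMeas V) (r : Fin G.edgeFinset.card → ℝ)
      (Es : Fin G.edgeFinset.card → Finset (Sym2 V))
      (qs : Fin G.edgeFinset.card → V → V → ℝ),
      Es ∈ seqE G v₁ ∧ (∀ k, 0 ≤ r k) ∧ (∑ k, r k = 1) ∧
      (∀ k x, (νs k).1 x ≠ 0 → memVerts (Es k) x) ∧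
      (∀ x, ∑ k, r k * (νs k).1 x = ν.1 x) ∧
      (∀ k, qs k ∈ TE (Es k)) ∧ (∀ k, Invariant (νs k).1 (qs k)) ∧
      c = ∑ k, ((r k : ℝ) : EReal) * relEntInt (νs k).1 (qs k) (phat G δ (Es k)) }

/-- Edges traversed along a path, given as a list of consecutively visited vertices. -/
def pathEdges : List V → Finset (Sym2 V)
  | [] => ∅
  | [_] => ∅
  | x :: y :: t => insert s(x, y) (pathEdges (y :: t))

/-- Product of one-step ORRW transition probabilities along a trajectory,
the trajectory being listed in reverse chronological order. -/
def stepsProb (G : SimpleGraph V) [DecidableRel G.Adj] (δ : ℝ) : List V → ℝ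
  | [] => 1
  | [_] => 1
  | y :: x :: t => phat G δ (pathEdges (x :: t).reverse) x y * stepsProb G δ (x :: t)

/-- The law of `(X_0, …, X_n)` for the `δ`-ORRW started at `v₁`. -/
def trajProb (G : SimpleGraph V) [DecidableRel G.Adj] (δ : ℝ) (v₁ : V) (n : ℕ)
    (f : Fin (n + 1) → V) : ℝ :=
  if f 0 = v₁ then stepsProb G δ (List.ofFn f).reverse else 0

/-- `P_{v₁}(L_{n+1} ∈ C)`: the probability that the empirical measure of the first
`n+1` positions of the `δ`-ORRW lies in `C`. -/
def probEmp (G : SimpleGraph V) [DecidableRel G.Adj] (δ : ℝ) (v₁ : V) (n : ℕ)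
    (C : Set (ProbMeas V)) : ℝ :=
  ∑ f : Fin (n + 1) → V, if empMeas n f ∈ C then trajProb G δ v₁ n f else 0

/-- The family `𝒮` of edge sets of connected subgraphs having an edge at `v₁`. -/
def scrS (G : SimpleGraph V) [DecidableRel G.Adj] (v₁ : V) : Set (Finset (Sym2 V)) :=
  {F | F ⊆ G.edgeFinset ∧ (∃ e ∈ F, v₁ ∈ e) ∧
    ∀ x y : V, memVerts F x → memVerts F y →
      (SimpleGraph.fromEdgeSet (↑F : Set (Sym2 V))).Reachable x y}

/-- `𝒮₀` is a decreasing subset of `𝒮`. -/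
def DecreasingIn (G : SimpleGraph V) [DecidableRel G.Adj] (v₁ : V)
    (S0 : Set (Finset (Sym2 V))) : Prop :=
  ∀ F₁ F₂, F₁ ∈ scrS G v₁ → F₂ ∈ scrS G v₁ → F₁ ⊆ F₂ → F₂ ∈ S0 → F₁ ∈ S0

/-- `P_{v₁}(T_{𝒮₀} > n)`. -/
def probTgt (G : SimpleGraph V) [DecidableRel G.Adj] (δ : ℝ) (v₁ : V)
    (S0 : Set (Finset (Sym2 V))) (n : ℕ) : ℝ :=
  ∑ f : Fin (n + 1) → V,
    if ∀ k, 1 ≤ k → k ≤ n → pathEdges ((List.ofFn f).take (k + 1)) ∈ S0 then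
      trajProb G δ v₁ n f
    else 0

/-- `P_{v₁}(C_E > n)` for the edge cover time `C_E`. -/
def probCgt (G : SimpleGraph V) [DecidableRel G.Adj] (δ : ℝ) (v₁ : V) (n : ℕ) : ℝ :=
  ∑ f : Fin (n + 1) → V,
    if ¬ G.edgeFinset ⊆ pathEdges (List.ofFn f) then trajProb G δ v₁ n f else 0

/-- `E_{v₁}[exp (α T_{𝒮₀})]`, valued in `ℝ≥0∞`; the stopping time takes values in
`{1, 2, …} ∪ {∞}`. -/
def expT (G : SimpleGraph V) [DecidableRel G.Adj] (δ : ℝ) (v₁ : V)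
    (S0 : Set (Finset (Sym2 V))) (α : ℝ) : ℝ≥0∞ :=
  (∑' n : ℕ, ENNReal.ofReal
      (Real.exp (α * (n + 1)) * (probTgt G δ v₁ S0 n - probTgt G δ v₁ S0 (n + 1)))) +
    (if 0 < α then (⊤ : ℝ≥0∞) else if α = 0 then 1 else 0) *
      ENNReal.ofReal (⨅ n : ℕ, probTgt G δ v₁ S0 n)

/-- `E_{v₁}[exp (α C_E)]`, valued in `ℝ≥0∞`. -/
def expC (G : SimpleGraph V) [DecidableRel G.Adj] (δ : ℝ) (v₁ : V) (α : ℝ) : ℝ≥0∞ :=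
  (∑' n : ℕ, ENNReal.ofReal
      (Real.exp (α * (n + 1)) * (probCgt G δ v₁ n - probCgt G δ v₁ (n + 1)))) +
    (if 0 < α then (⊤ : ℝ≥0∞) else if α = 0 then 1 else 0) *
      ENNReal.ofReal (⨅ n : ℕ, probCgt G δ v₁ n)

/-- The critical exponent `α_c(δ)` attached to a family `𝒮₀` of edge sets. -/
def alphaC (G : SimpleGraph V) [DecidableRel G.Adj] (δ : ℝ)
    (S0 : Set (Finset (Sym2 V))) : EReal :=
  sInf { c : EReal | ∃ (ν : ProbMeas V) (F : Finset (Sym2 V)) (q : V → V → ℝ),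
    F ∈ S0 ∧ q ∈ TE F ∧ (∀ x, ν.1 x ≠ 0 → memVerts F x) ∧ Invariant ν.1 q ∧
    c = relEntInt ν.1 q (phat G δ F) }

/-- `α_c^1(δ)`: the critical exponent for the cover time. -/
def alphaC1 (G : SimpleGraph V) [DecidableRel G.Adj] (v₁ : V) (δ : ℝ) : EReal :=
  alphaC G δ (scrS G v₁ \ {G.edgeFinset})

end Graph

section Lifted

variable {V : Type} [Fintype V] [LinearOrder V]

/-- Smaller endpoint of an unordered pair. -/
def sym2lo (e : Sym2 V) : V := Sym2.lift ⟨fun a b => min a b, fun a b => min_comm a b⟩ e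

/-- Larger endpoint of an unordered pair. -/
def sym2hi (e : Sym2 V) : V := Sym2.lift ⟨fun a b => max a b, fun a b => max_comm a b⟩ e

/-- `V_S = E × {-1, 1}`: vertex set of the lifted directed graph `S`
(`true` plays the role of `+1`). -/
abbrev VSet (G : SimpleGraph V) [DecidableRel G.Adj] : Type :=
  {e : Sym2 V // e ∈ G.edgeFinset} × Bool

/-- Tail `z⁻` of an oriented edge. -/
def zm (G : SimpleGraph V) [DecidableRel G.Adj] (z : VSet G) : V :=
  if z.2 then sym2lo z.1.1 else sym2hi z.1.1

/-- Head `z⁺` of an oriented edge. -/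
def zp (G : SimpleGraph V) [DecidableRel G.Adj] (z : VSet G) : V :=
  if z.2 then sym2hi z.1.1 else sym2lo z.1.1

/-- The kernel `p_F` on the lifted directed graph `S`. -/
def pS (G : SimpleGraph V) [DecidableRel G.Adj] (δ : ℝ) (F : Finset (Sym2 V))
    (z₁ z₂ : VSet G) : ℝ :=
  if zp G z₁ = zm G z₂ then
    gw δ F z₂.1.1 / ∑ w : VSet G, (if zp G z₁ = zm G w then gw δ F w.1.1 else 0)
  else 0

/-- `𝒯_S`: stochastic matrices on `V_S` moving along orientations. -/
def TS (G : SimpleGraph V) [DecidableRel G.Adj] : Set (VSet G → VSet G → ℝ) :=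
  {q | (∀ z w, 0 ≤ q z w) ∧ (∀ z, ∑ w, q z w = 1) ∧ ∀ z w, q z w ≠ 0 → zp G z = zm G w}

/-- `𝒞(𝒮₀)`: probability measures on `V_S` whose first marginal is supported in
some member of `𝒮₀`. -/
def CC (G : SimpleGraph V) [DecidableRel G.Adj] (S0 : Set (Finset (Sym2 V))) :
    Set (ProbMeas (VSet G)) :=
  {μ | ∃ F ∈ S0, ∀ z : VSet G, μ.1 z ≠ 0 → z.1.1 ∈ F}

/-- `Λ_{δ,𝒮₀}`. -/
def Lam (G : SimpleGraph V) [DecidableRel G.Adj] (v₁ : V) (δ : ℝ)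
    (S0 : Set (Finset (Sym2 V))) (μ : ProbMeas (VSet G)) : EReal :=
  sInf { c : EReal |
    ∃ (μs : Fin G.edgeFinset.card → ProbMeas (VSet G)) (r : Fin G.edgeFinset.card → ℝ)
      (Es : Fin G.edgeFinset.card → Finset (Sym2 V))
      (qs : Fin G.edgeFinset.card → VSet G → VSet G → ℝ),
      Es ∈ seqE G v₁ ∧ (∀ k, 0 ≤ r k) ∧ (∀ k, Es k ∉ S0 → r k = 0) ∧ (∑ k, r k = 1) ∧
      (∀ k z, (μs k).1 z ≠ 0 → z.1.1 ∈ Es k) ∧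
      (∀ z, ∑ k, r k * (μs k).1 z = μ.1 z) ∧
      (∀ k, qs k ∈ TS G) ∧ (∀ k, Invariant (μs k).1 (qs k)) ∧
      c = ∑ k, ((r k : ℝ) : EReal) * relEntInt (μs k).1 (qs k) (pS G δ (Es k)) }

/-- `Λ^z_{δ,𝒮₀}`. -/
def LamZ (G : SimpleGraph V) [DecidableRel G.Adj] (v₁ : V) (δ : ℝ)
    (S0 : Set (Finset (Sym2 V))) (z : VSet G) (μ : ProbMeas (VSet G)) : EReal :=
  sInf { c : EReal |
    ∃ (μs : Fin G.edgeFinset.card → ProbMeas (VSet G)) (r : Fin G.edgeFinset.card → ℝ)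
      (Es : Fin G.edgeFinset.card → Finset (Sym2 V))
      (qs : Fin G.edgeFinset.card → VSet G → VSet G → ℝ),
      Es ∈ seqE G v₁ ∧ (∀ k : Fin G.edgeFinset.card, (k : ℕ) = 0 → Es k = {z.1.1}) ∧
      (∀ k, 0 ≤ r k) ∧ (∀ k, Es k ∉ S0 → r k = 0) ∧ (∑ k, r k = 1) ∧
      (∀ k w, (μs k).1 w ≠ 0 → w.1.1 ∈ Es k) ∧
      (∀ w, ∑ k, r k * (μs k).1 w = μ.1 w) ∧
      (∀ k, qs k ∈ TS G) ∧ (∀ k, Invariant (μs k).1 (qs k)) ∧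
      c = ∑ k, ((r k : ℝ) : EReal) * relEntInt (μs k).1 (qs k) (pS G δ (Es k)) }

/-- `Λ₁`: the Donsker–Varadhan functional for the simple random walk on `S`
(whose kernel is `pS` with `δ = 1`). -/
def Lam1 (G : SimpleGraph V) [DecidableRel G.Adj] (μ : ProbMeas (VSet G)) : EReal :=
  sInf { c : EReal | ∃ q ∈ TS G, Invariant μ.1 q ∧ c = relEntInt μ.1 q (pS G 1 ∅) }

/-- Boundary `∂F` of an edge set: edges of `F` adjacent to some edge outside `F`. -/
def bdry (G : SimpleGraph V) [DecidableRel G.Adj] (F : Finset (Sym2 V)) : Finset (Sym2 V) :=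
  F.filter fun e => ∃ e' ∈ G.edgeFinset \ F, edgeAdj e e'

/-- Out-degree `d(z)` of `z` in `S`. -/
def outDeg (G : SimpleGraph V) [DecidableRel G.Adj] (z : VSet G) : ℕ :=
  (Finset.univ.filter (fun w : VSet G => zp G z = zm G w)).card

/-- Number `k(z)` of out-neighbours of `z` lying in `F × {-1, 1}`. -/
def outDegIn (G : SimpleGraph V) [DecidableRel G.Adj] (F : Finset (Sym2 V))
    (z : VSet G) : ℕ :=
  (Finset.univ.filter (fun w : VSet G => zp G z = zm G w ∧ w.1.1 ∈ F)).card

/-- The law of `(Z_0, …, Z_n)` for the lifted `δ`-ORRW conditioned on `Z_0 = z`. -/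
def liftTraj (G : SimpleGraph V) [DecidableRel G.Adj] (δ : ℝ) (z : VSet G) (n : ℕ)
    (g : Fin (n + 1) → VSet G) : ℝ :=
  if g 0 = z then
    ∏ i : Fin n,
      pS G δ ((Finset.Iic i.castSucc).image (fun j => (g j).1.1))
        (g i.castSucc) (g i.succ)
  else 0

/-- The restricted logarithmic Laplace functional `W^{n+1}_{𝒮₀}(z)`. -/
def Wres (G : SimpleGraph V) [DecidableRel G.Adj] (δ : ℝ) (z : VSet G)
    (S0 : Set (Finset (Sym2 V))) (h : ProbMeas (VSet G) → ℝ) (n : ℕ) : EReal :=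
  if 0 < ∑ g : Fin (n + 1) → VSet G,
      (if empMeas n g ∈ CC G S0 then liftTraj G δ z n g else 0) then
    ((-((((n : ℝ) + 1))⁻¹ * Real.log (∑ g : Fin (n + 1) → VSet G,
      if empMeas n g ∈ CC G S0 then
        Real.exp (-((n : ℝ) + 1) * h (empMeas n g)) * liftTraj G δ z n g
      else 0)) : ℝ) : EReal)
  else (⊤ : EReal)

end Lifted

/-!
For an edge set `F`, only the steps of `phat G δ F` along `F` matter, so the cost of an admissible
pair `(ν, q)` is its entropy rate relative to the walk killed on leaving `F`. By the
Donsker–Varadhan argument the least cost on `F` is `-log l`, where `l` is the Perron eigenvalue of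
the killed walk, and it is attained by a reversible walk that charges every vertex of `F`.

For a fixed pair `(ν, q)` the cost depends on `δ` only through `∑ x, ν x * log (W x)`, where `W x`
is the total weight at `x` divided by `δ`. Hence costs are nonincreasing and `1`-Lipschitz in
`log δ`, and so is their minimum, which gives continuity on `(0, ∞)` and uniform continuity on
`[δ₀, ∞)`. If `F ≠ E`, then some vertex of `F` lies on an edge outside `F`; there `W` is strictly
decreasing in `δ`, and the minimiser charges it, so the minimum is strictly decreasing. Finally, the
cost of simple random walk on `F` tends to `0` as `δ → ∞`.
-/

/-! ### Entropy rates of stationary chains -/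

section EntropyRate

variable {A : Type} [Fintype A]

/-- The real number `∑ x, ν x * R(q x ‖ p x)`. It agrees with `relEntInt ν q p` when every row of
`q` is absolutely continuous with respect to that of `p`; `p` need not be stochastic. -/
def entropyRate (ν : A → ℝ) (q p : A → A → ℝ) : ℝ :=
  ∑ x, ν x * ∑ y, q x y * Real.log (q x y / p x y)

/-- The Markov chain with kernel `q` is stationary under the law `ν`. Rows of `q` off the support of
`ν` need not sum to one, as for the kernels of `TE`. -/
structure IsStationaryChain (ν : ProbMeas A) (q : A → A → ℝ) : Prop where
  kernel_nonneg : ∀ x y, 0 ≤ q x y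
  sum_kernel : ∀ x, ν.1 x ≠ 0 → ∑ y, q x y = 1
  invariant : Invariant ν.1 q

variable {ν : A → ℝ} {q p p' : A → A → ℝ}

lemma relEntInt_eq_coe_entropyRate (hac : ∀ x y, p x y = 0 → q x y = 0) :
    relEntInt ν q p = (entropyRate ν q p : EReal) := by
  have coe_sum (f : A → ℝ) : ((∑ x, f x : ℝ) : EReal) = ∑ x, (f x : EReal) :=
    map_sum (⟨⟨Real.toEReal, EReal.coe_zero⟩, EReal.coe_add⟩ : ℝ →+ EReal) f Finset.univ
  rw [relEntInt, entropyRate, coe_sum]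
  refine Finset.sum_congr rfl fun x _ => ?_
  rw [EReal.coe_mul, relEnt, if_pos (hac x)]

lemma entropyRate_congr (h : ∀ x y, q x y ≠ 0 → p x y = p' x y) :
    entropyRate ν q p = entropyRate ν q p' := by
  refine Finset.sum_congr rfl fun x _ => congrArg (ν x * ·) (Finset.sum_congr rfl fun y _ => ?_)
  by_cases hq : q x y = 0
  · simp only [hq, zero_mul]
  · rw [h x y hq]

lemma sum_mul_log_le_sum_mul_log_div {ι : Type*} [Fintype ι] {q p g : ι → ℝ}
    (hq : ∀ i, 0 ≤ q i) (hp : ∀ i, 0 ≤ p i) (hg : ∀ i, 0 ≤ g i)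
    (hpos : ∀ i, q i ≠ 0 → 0 < p i ∧ 0 < g i) (hsum : ∑ i, p i * g i ≤ ∑ i, q i) :
    ∑ i, q i * Real.log (g i) ≤ ∑ i, q i * Real.log (q i / p i) := by
  have pointwise (i : ι) :
      q i * Real.log (g i) ≤ q i * Real.log (q i / p i) + (p i * g i - q i) := by
    rcases (hq i).eq_or_lt' with hqi | hqi
    · simp only [hqi, zero_mul, sub_zero, zero_add, mul_nonneg (hp i) (hg i)]
    obtain ⟨hpi, hgi⟩ := hpos i hqi.ne'
    have hlog := Real.log_le_sub_one_of_pos (div_pos (mul_pos hpi hgi) hqi)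
    rw [Real.log_div (by positivity) hqi.ne', Real.log_mul hpi.ne' hgi.ne',
      le_sub_iff_add_le, le_div_iff₀ hqi] at hlog
    rw [Real.log_div hqi.ne' hpi.ne']
    linarith
  have total := Finset.sum_le_sum fun i (_ : i ∈ Finset.univ) => pointwise i
  rw [Finset.sum_add_distrib, Finset.sum_sub_distrib] at total
  linarith

namespace IsStationaryChain

variable {ν : ProbMeas A} {u : A → ℝ} {l : ℝ}

lemma ne_zero_of_kernel_ne_zero (h : IsStationaryChain ν q) {x y : A} (hx : ν.1 x ≠ 0)
    (hxy : q x y ≠ 0) : ν.1 y ≠ 0 := by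
  intro hy
  have flow := h.invariant y
  rw [hy, Finset.sum_eq_zero_iff_of_nonneg
    fun x _ => mul_nonneg (ν.2.1 x) (h.kernel_nonneg x y)] at flow
  exact mul_ne_zero hx hxy (flow x (Finset.mem_univ x))

lemma sum_mul_sum_kernel (h : IsStationaryChain ν q) (f : A → ℝ) :
    ∑ x, ν.1 x * ∑ y, q x y * f y = ∑ y, ν.1 y * f y := by
  simp only [Finset.mul_sum, ← mul_assoc]
  rw [Finset.sum_comm]
  simp only [← Finset.sum_mul, h.invariant _]

/-- By stationarity the increments of `log u` average to zero. -/
lemma sum_mul_sum_log_ratio (h : IsStationaryChain ν q) (hu : ∀ x, ν.1 x ≠ 0 → 0 < u x)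
    (hl : 0 < l) :
    ∑ x, ν.1 x * ∑ y, q x y * Real.log (u y / (l * u x)) = -Real.log l := by
  have row (x : A) : ν.1 x * ∑ y, q x y * Real.log (u y / (l * u x)) =
      ν.1 x * ∑ y, q x y * Real.log (u y) - ν.1 x * Real.log (u x) - ν.1 x * Real.log l := by
    by_cases hx : ν.1 x = 0
    · simp only [hx, zero_mul, sub_zero]
    have entry (y : A) : q x y * Real.log (u y / (l * u x)) =
        q x y * Real.log (u y) - q x y * (Real.log l + Real.log (u x)) := by
      by_cases hxy : q x y = 0
      · simp only [hxy, zero_mul, sub_zero]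
      have huy := hu y (h.ne_zero_of_kernel_ne_zero hx hxy)
      rw [Real.log_div huy.ne' (mul_pos hl (hu x hx)).ne', Real.log_mul hl.ne' (hu x hx).ne',
        mul_sub]
    simp only [entry, Finset.sum_sub_distrib, ← Finset.sum_mul, h.sum_kernel x hx]
    ring
  simp only [row, Finset.sum_sub_distrib, h.sum_mul_sum_kernel, ← Finset.sum_mul, ν.2.2]
  ring

lemma entropyRate_eq_neg_log (h : IsStationaryChain ν q) (hu : ∀ x, ν.1 x ≠ 0 → 0 < u x)
    (hl : 0 < l) (hratio : ∀ x y, q x y ≠ 0 → q x y / p x y = u y / (l * u x)) :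
    entropyRate ν.1 q p = -Real.log l := by
  rw [← h.sum_mul_sum_log_ratio hu hl, entropyRate]
  refine Finset.sum_congr rfl fun x _ => congrArg (ν.1 x * ·) (Finset.sum_congr rfl fun y _ => ?_)
  by_cases hxy : q x y = 0
  · simp only [hxy, zero_mul]
  · rw [hratio x y hxy]

/-- The easy half of the Donsker–Varadhan formula for the spectral radius of `p`. -/
theorem neg_log_le_entropyRate (h : IsStationaryChain ν q) (hp : ∀ x y, 0 ≤ p x y)
    (hac : ∀ x y, p x y = 0 → q x y = 0) (hu : ∀ x, 0 ≤ u x)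
    (hu_pos : ∀ x, ν.1 x ≠ 0 → 0 < u x) (hl : 0 < l)
    (hsuper : ∀ x, ν.1 x ≠ 0 → ∑ y, p x y * u y ≤ l * u x) :
    -Real.log l ≤ entropyRate ν.1 q p := by
  rw [← h.sum_mul_sum_log_ratio hu_pos hl]
  refine Finset.sum_le_sum fun x _ => ?_
  by_cases hx : ν.1 x = 0
  · simp only [hx, zero_mul, le_refl]
  have hlu : 0 < l * u x := mul_pos hl (hu_pos x hx)
  refine mul_le_mul_of_nonneg_left (sum_mul_log_le_sum_mul_log_div (h.kernel_nonneg x) (hp x)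
    (fun y => div_nonneg (hu y) hlu.le) (fun y hxy => ⟨?_, ?_⟩) ?_) (ν.2.1 x)
  · exact (hp x y).lt_of_ne' (mt (hac x y) hxy)
  · exact div_pos (hu_pos y (h.ne_zero_of_kernel_ne_zero hx hxy)) hlu
  · simp only [← mul_div_assoc, ← Finset.sum_div]
    rw [h.sum_kernel x hx, div_le_one hlu]
    exact hsuper x hx

lemma entropyRate_nonneg (h : IsStationaryChain ν q) (hp : ∀ x y, 0 ≤ p x y)
    (hac : ∀ x y, p x y = 0 → q x y = 0) (hsub : ∀ x, ∑ y, p x y ≤ 1) :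
    0 ≤ entropyRate ν.1 q p := by
  simpa using h.neg_log_le_entropyRate (u := 1) hp hac (fun _ => zero_le_one)
    (fun _ _ => zero_lt_one) one_pos fun x _ => by simpa using hsub x

end IsStationaryChain

end EntropyRate

/-! ### Reversible walks -/

section Conductance

variable {A : Type} [Fintype A] {c : A → A → ℝ}

/-- The transition kernel of the random walk on the network with conductances `c`. -/
def conductanceKernel (c : A → A → ℝ) (x y : A) : ℝ := c x y / ∑ z, c x z

/-- The stationary law of the random walk on the network with conductances `c`. -/
def conductanceMeas (c : A → A → ℝ) (hc : ∀ x y, 0 ≤ c x y) (htot : ∑ x, ∑ y, c x y ≠ 0) :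
    ProbMeas A :=
  ⟨fun x => (∑ y, c x y) / ∑ x, ∑ y, c x y,
    fun x => div_nonneg (Finset.sum_nonneg fun y _ => hc x y)
      (Finset.sum_nonneg fun x _ => Finset.sum_nonneg fun y _ => hc x y),
    by rw [← Finset.sum_div, div_self htot]⟩

lemma isStationaryChain_conductance (hc : ∀ x y, 0 ≤ c x y) (hsymm : ∀ x y, c x y = c y x)
    (htot : ∑ x, ∑ y, c x y ≠ 0) :
    IsStationaryChain (conductanceMeas c hc htot) (conductanceKernel c) where
  kernel_nonneg x y := div_nonneg (hc x y) (Finset.sum_nonneg fun z _ => hc x z)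
  sum_kernel x hx := by
    have hrow : ∑ y, c x y ≠ 0 := fun h0 => hx (by simp only [conductanceMeas, h0, zero_div])
    simp only [conductanceKernel, ← Finset.sum_div, div_self hrow]
  invariant y := by
    have detailed (x : A) : (conductanceMeas c hc htot).1 x * conductanceKernel c x y =
        c y x / ∑ x, ∑ y, c x y := by
      by_cases hrow : ∑ z, c x z = 0
      · have hxy : c x y = 0 := (Finset.sum_eq_zero_iff_of_nonneg fun z _ => hc x z).1 hrow y
          (Finset.mem_univ y)
        simp only [conductanceMeas, conductanceKernel, hrow, ← hsymm x y, hxy, zero_div, mul_zero]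
      · simp only [conductanceMeas, conductanceKernel, hsymm y x]
        field_simp
    rw [Finset.sum_congr rfl fun x _ => detailed x, ← Finset.sum_div]
    rfl

end Conductance

/-! ### Nonnegative eigenvectors of symmetric matrices -/

section NonnegEigenvector

open Matrix

variable {n : Type*} [Fintype n]

lemma dotProduct_mulVec_le_abs {M : Matrix n n ℝ} (hM : ∀ i j, 0 ≤ M i j) (v : n → ℝ) :
    v ⬝ᵥ M *ᵥ v ≤ |v| ⬝ᵥ M *ᵥ |v| := by
  simp only [dotProduct, mulVec, Finset.mul_sum, Pi.abs_apply]
  refine Finset.sum_le_sum fun i _ => Finset.sum_le_sum fun j _ => ?_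
  calc v i * (M i j * v j) ≤ |v i * (M i j * v j)| := le_abs_self _
    _ = |v i| * (M i j * |v j|) := by rw [abs_mul, abs_mul, abs_of_nonneg (hM i j)]

lemma isSelfAdjoint_toEuclideanCLM {M : Matrix n n ℝ} (hsymm : M.IsSymm) :
    IsSelfAdjoint (toEuclideanCLM (𝕜 := ℝ) M) := by
  refine IsSelfAdjoint.map (R := Matrix n n ℝ) ?_ toEuclideanCLM
  rw [IsSelfAdjoint, star_eq_conjTranspose, conjTranspose_eq_transpose_of_trivial, hsymm.eq]

lemma reApplyInnerSelf_toEuclideanCLM (M : Matrix n n ℝ) (v : EuclideanSpace ℝ n) :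
    (toEuclideanCLM (𝕜 := ℝ) M).reApplyInnerSelf v = v.ofLp ⬝ᵥ M *ᵥ v.ofLp := by
  rw [ContinuousLinearMap.reApplyInnerSelf_apply, real_inner_comm, inner_toEuclideanCLM]
  rfl

lemma one_dotProduct_mulVec_one_pos {M : Matrix n n ℝ} (hM : ∀ i j, 0 ≤ M i j)
    (hpos : ∃ i j, 0 < M i j) : 0 < (1 : n → ℝ) ⬝ᵥ M *ᵥ 1 := by
  obtain ⟨i, j, hij⟩ := hpos
  simp only [dotProduct, mulVec, Pi.one_apply, one_mul, mul_one]
  exact Finset.sum_pos' (fun i _ => Finset.sum_nonneg fun j _ => hM i j) ⟨i, Finset.mem_univ i,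
    Finset.sum_pos' (fun j _ => hM i j) ⟨j, Finset.mem_univ j, hij⟩⟩

/-- A maximiser of the Rayleigh quotient is an eigenvector, and taking absolute values of its
entries preserves maximality. -/
theorem exists_nonneg_eigenvector {M : Matrix n n ℝ} (hsymm : M.IsSymm)
    (hM : ∀ i j, 0 ≤ M i j) (hpos : ∃ i j, 0 < M i j) :
    ∃ (l : ℝ) (u : n → ℝ), 0 < l ∧ 0 ≤ u ∧ u ≠ 0 ∧ M *ᵥ u = l • u := by
  set T := toEuclideanCLM (𝕜 := ℝ) M
  let one : EuclideanSpace ℝ n := WithLp.toLp 2 1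
  obtain ⟨v, hv, hmax⟩ := (isCompact_sphere (0 : EuclideanSpace ℝ n) ‖one‖).exists_isMaxOn
    ⟨one, by simp⟩ T.reApplyInnerSelf_continuous.continuousOn
  let w : EuclideanSpace ℝ n := WithLp.toLp 2 |v.ofLp|
  have hw_norm : ‖w‖ = ‖one‖ := by
    rw [← mem_sphere_zero_iff_norm.1 hv]
    simp [EuclideanSpace.norm_eq, w]
  have hvw : T.reApplyInnerSelf v ≤ T.reApplyInnerSelf w := by
    simpa only [T, reApplyInnerSelf_toEuclideanCLM] using dotProduct_mulVec_le_abs hM v.ofLp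
  have hwmax : IsMaxOn T.reApplyInnerSelf (Metric.sphere 0 ‖w‖) w := by
    rw [hw_norm]
    exact fun z hz => (hmax hz).trans hvw
  have hw_pos : 0 < T.reApplyInnerSelf w := by
    refine lt_of_lt_of_le ?_ ((hmax (show one ∈ Metric.sphere 0 ‖one‖ by simp)).trans hvw)
    simpa only [T, reApplyInnerSelf_toEuclideanCLM] using one_dotProduct_mulVec_one_pos hM hpos
  have hw_ne : w ≠ 0 := by
    rintro h
    simp [h, T.reApplyInnerSelf_apply] at hw_pos
  have heig : T w = _ • w :=
    ((isSelfAdjoint_toEuclideanCLM hsymm).hasEigenvector_of_isMaxOn hw_ne hwmax).apply_eq_smul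
  rw [T.reApplyInnerSelf_apply, heig, real_inner_smul_left, RCLike.re_to_real] at hw_pos
  refine ⟨_, |v.ofLp|, pos_of_mul_pos_left hw_pos real_inner_self_nonneg, abs_nonneg _, ?_,
    congrArg WithLp.ofLp heig⟩
  exact fun h => hw_ne (congrArg (WithLp.toLp 2) h)

/-- Symmetrising: `u = v / √p` for an eigenvector `v` of the matrix `M i j / (√(p i) * √(p j))`. -/
theorem exists_nonneg_weighted_eigenvector {M : Matrix n n ℝ} {p : n → ℝ} (hsymm : M.IsSymm)
    (hM : ∀ i j, 0 ≤ M i j) (hpos : ∃ i j, 0 < M i j) (hp : ∀ i j, M i j ≠ 0 → 0 < p i) :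
    ∃ (l : ℝ) (u : n → ℝ), 0 < l ∧ 0 ≤ u ∧ M *ᵥ u ≠ 0 ∧ M *ᵥ u = l • (p * u) := by
  have hp_symm (i j : n) (hij : M i j ≠ 0) : 0 < p j := hp j i (by rwa [hsymm.apply])
  let A : Matrix n n ℝ := .of fun i j => M i j / (√(p i) * √(p j))
  obtain ⟨l, v, hl, hv, hv_ne, heig⟩ := exists_nonneg_eigenvector (M := A)
    (IsSymm.ext fun i j => by simp only [A, of_apply, hsymm.apply i j, mul_comm])
    (fun i j => div_nonneg (hM i j) (by positivity))
    (by
      obtain ⟨i, j, hij⟩ := hpos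
      exact ⟨i, j, div_pos hij
        (mul_pos (Real.sqrt_pos.2 (hp i j hij.ne')) (Real.sqrt_pos.2 (hp_symm i j hij.ne')))⟩)
  have hrow (i : n) : (M *ᵥ fun j => v j / √(p j)) i = √(p i) * (l * v i) := by
    rw [← smul_eq_mul l, ← Pi.smul_apply, ← heig, mulVec, mulVec, dotProduct, dotProduct,
      Finset.mul_sum]
    refine Finset.sum_congr rfl fun j _ => ?_
    by_cases hij : M i j = 0
    · simp only [A, of_apply, hij, zero_mul, zero_div, mul_zero]
    · have := Real.sqrt_pos.2 (hp i j hij)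
      simp only [A, of_apply]
      field_simp
  have hp_of_ne (i : n) (hi : v i ≠ 0) : 0 < √(p i) := by
    refine (Real.sqrt_nonneg _).lt_of_ne' fun h0 => mul_ne_zero hl.ne' hi ?_
    simpa [A, mulVec, dotProduct, h0] using (congrFun heig i).symm
  refine ⟨l, fun j => v j / √(p j), hl, fun j => div_nonneg (hv j) (Real.sqrt_nonneg _), ?_, ?_⟩
  · obtain ⟨i, hi⟩ := Function.ne_iff.1 hv_ne
    refine Function.ne_iff.2 ⟨i, ?_⟩
    rw [hrow]
    exact mul_ne_zero (hp_of_ne i hi).ne' (mul_ne_zero hl.ne' hi)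
  · ext i
    rw [hrow, Pi.smul_apply, Pi.mul_apply, smul_eq_mul]
    by_cases hi : v i = 0
    · simp only [hi, zero_div, mul_zero]
    · have hsqrt := hp_of_ne i hi
      nth_rw 2 [← Real.mul_self_sqrt (Real.sqrt_pos.1 hsqrt).le]
      field_simp

end NonnegEigenvector

/-! ### Walks on an edge set -/

section EdgeWalks

open Matrix

variable {V : Type} {F : Finset (Sym2 V)} {x y : V}

lemma of_reachable_of_forall_adj {H : SimpleGraph V} {P : V → Prop}
    (hstep : ∀ x y, H.Adj x y → P x → P y) (h : H.Reachable x y) (hx : P x) : P y := by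
  obtain ⟨w⟩ := h
  induction w with
  | nil => exact hx
  | cons hadj _ ih => exact ih (hstep _ _ hadj hx)

lemma memVerts_left (h : s(x, y) ∈ F) : memVerts F x := ⟨_, h, Sym2.mem_mk_left x y⟩

lemma memVerts_right (h : s(x, y) ∈ F) : memVerts F y := ⟨_, h, Sym2.mem_mk_right x y⟩

lemma memVerts_iff_exists : memVerts F x ↔ ∃ y, s(x, y) ∈ F := by
  refine ⟨fun ⟨e, he, hx⟩ => ?_, fun ⟨y, hy⟩ => memVerts_left hy⟩
  obtain ⟨y, rfl⟩ := Sym2.mem_iff_exists.1 hx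
  exact ⟨y, he⟩

section EdgeMatrix

variable [DecidableEq V]

/-- The adjacency matrix of the graph with edge set `F`. -/
def edgeMatrix (F : Finset (Sym2 V)) : Matrix V V ℝ := .of fun x y => if s(x, y) ∈ F then 1 else 0

lemma edgeMatrix_of_mem (h : s(x, y) ∈ F) : edgeMatrix F x y = 1 := if_pos h

lemma edgeMatrix_nonneg (F : Finset (Sym2 V)) (x y : V) : 0 ≤ edgeMatrix F x y := by
  rw [edgeMatrix, of_apply]
  positivity

lemma edgeMatrix_ne_zero : edgeMatrix F x y ≠ 0 ↔ s(x, y) ∈ F := by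
  simp [edgeMatrix]

lemma isSymm_edgeMatrix (F : Finset (Sym2 V)) : (edgeMatrix F).IsSymm :=
  IsSymm.ext fun x y => by simp only [edgeMatrix, of_apply, Sym2.eq_swap]

end EdgeMatrix

variable [Fintype V]

/-- The triples `(ν, F, q)` over which `alphaC` is an infimum. -/
structure IsAdmissible (F : Finset (Sym2 V)) (ν : ProbMeas V) (q : V → V → ℝ) : Prop where
  mem_TE : q ∈ TE F
  memVerts_of_ne_zero : ∀ x, ν.1 x ≠ 0 → memVerts F x
  invariant : Invariant ν.1 q

lemma IsAdmissible.isStationaryChain {ν : ProbMeas V} {q : V → V → ℝ} (h : IsAdmissible F ν q) :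
    IsStationaryChain ν q :=
  ⟨h.mem_TE.1, fun x hx => h.mem_TE.2.1 x (h.memVerts_of_ne_zero x hx), h.invariant⟩

lemma exists_isAdmissible_conductanceKernel {c : V → V → ℝ} (hc : ∀ x y, 0 ≤ c x y)
    (hsymm : ∀ x y, c x y = c y x) (hsupp : ∀ x y, c x y ≠ 0 ↔ s(x, y) ∈ F) (hF : F.Nonempty) :
    ∃ ν, IsAdmissible F ν (conductanceKernel c) ∧ ∀ x, memVerts F x → ν.1 x ≠ 0 := by
  have hrow (x : V) : ∑ y, c x y ≠ 0 ↔ memVerts F x := by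
    rw [Ne, Finset.sum_eq_zero_iff_of_nonneg fun y _ => hc x y, memVerts_iff_exists]
    simp only [Finset.mem_univ, true_imp_iff, not_forall, ← hsupp, Ne]
  have htot : ∑ x, ∑ y, c x y ≠ 0 := by
    obtain ⟨⟨x, y⟩, hxy⟩ := hF
    rw [Ne, Finset.sum_eq_zero_iff_of_nonneg fun x _ => Finset.sum_nonneg fun y _ => hc x y]
    exact fun h => (hrow x).2 (memVerts_left hxy) (h x (Finset.mem_univ x))
  have hstat := isStationaryChain_conductance hc hsymm htot
  have hmeas (x : V) : (conductanceMeas c hc htot).1 x ≠ 0 ↔ memVerts F x := by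
    rw [← hrow, conductanceMeas, Ne, div_eq_zero_iff, or_iff_left htot]
  refine ⟨conductanceMeas c hc htot, ⟨⟨hstat.kernel_nonneg,
    fun x hx => hstat.sum_kernel x ((hmeas x).2 hx), fun x y hxy => (hsupp x y).1 ?_⟩,
    fun x => (hmeas x).1, hstat.invariant⟩, fun x => (hmeas x).2⟩
  exact fun h0 => hxy (by rw [conductanceKernel, h0, zero_div])

end EdgeWalks

/-! ### The walk killed on leaving an edge set -/

section KilledWalk

variable {V : Type} [Fintype V] [DecidableEq V] {G : SimpleGraph V} [DecidableRel G.Adj]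
  {F : Finset (Sym2 V)} {δ a b : ℝ} {x y : V} {ν : ProbMeas V} {q : V → V → ℝ}

/-- The total weight at `x` divided by `δ`, so that edges of `F` have weight one. -/
def normWeight (G : SimpleGraph V) [DecidableRel G.Adj] (δ : ℝ) (F : Finset (Sym2 V))
    (x : V) : ℝ :=
  ∑ z ∈ G.neighborFinset x, if s(x, z) ∈ F then 1 else δ⁻¹

/-- The kernel `phat G δ F` killed when it leaves `F`. -/
def killedKernel (G : SimpleGraph V) [DecidableRel G.Adj] (δ : ℝ) (F : Finset (Sym2 V))
    (x y : V) : ℝ :=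
  edgeMatrix F x y / normWeight G δ F x

lemma sum_edgeMatrix_eq (hF : F ⊆ G.edgeFinset) (x : V) :
    ∑ y, edgeMatrix F x y = ∑ z ∈ G.neighborFinset x, if s(x, z) ∈ F then 1 else 0 := by
  refine (Finset.sum_subset (Finset.subset_univ _) fun z _ hz => if_neg fun hxz => hz ?_).symm
  simpa using hF hxz

lemma sum_edgeMatrix_le_normWeight (hF : F ⊆ G.edgeFinset) (hδ : 0 < δ) (x : V) :
    ∑ y, edgeMatrix F x y ≤ normWeight G δ F x := by
  rw [sum_edgeMatrix_eq hF]
  refine Finset.sum_le_sum fun z _ => ?_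
  split_ifs
  · exact le_rfl
  · exact (inv_pos.2 hδ).le

lemma normWeight_pos (hF : F ⊆ G.edgeFinset) (hδ : 0 < δ) (hx : memVerts F x) :
    0 < normWeight G δ F x := by
  obtain ⟨y, hxy⟩ := memVerts_iff_exists.1 hx
  refine lt_of_lt_of_le ?_ (sum_edgeMatrix_le_normWeight hF hδ x)
  exact Finset.sum_pos' (fun y _ => edgeMatrix_nonneg F x y)
    ⟨y, Finset.mem_univ y, by rw [edgeMatrix_of_mem hxy]; exact one_pos⟩

lemma normWeight_nonneg (hδ : 0 < δ) : 0 ≤ normWeight G δ F x :=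
  Finset.sum_nonneg fun _ _ => by positivity

lemma normWeight_anti (ha : 0 < a) (hab : a ≤ b) : normWeight G b F x ≤ normWeight G a F x := by
  refine Finset.sum_le_sum fun z _ => ?_
  split_ifs
  · exact le_rfl
  · exact inv_anti₀ ha hab

lemma normWeight_lt (ha : 0 < a) (hab : a < b) (hxy : G.Adj x y) (hy : s(x, y) ∉ F) :
    normWeight G b F x < normWeight G a F x := by
  refine Finset.sum_lt_sum (fun z _ => ?_) ⟨y, by simpa using hxy, ?_⟩
  · split_ifs
    · exact le_rfl
    · exact inv_anti₀ ha hab.le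
  · rw [if_neg hy, if_neg hy]
    exact inv_strictAnti₀ ha hab

lemma normWeight_le_div_mul (ha : 0 < a) (hab : a ≤ b) :
    normWeight G a F x ≤ b / a * normWeight G b F x := by
  rw [normWeight, normWeight, Finset.mul_sum]
  refine Finset.sum_le_sum fun z _ => ?_
  have hb := ha.trans_le hab
  split_ifs
  · rwa [mul_one, one_le_div ha]
  · exact le_of_eq (by field_simp)

lemma tendsto_normWeight (hF : F ⊆ G.edgeFinset) (x : V) :
    Tendsto (fun δ => normWeight G δ F x) atTop (𝓝 (∑ y, edgeMatrix F x y)) := by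
  rw [sum_edgeMatrix_eq hF]
  refine tendsto_finsetSum _ fun z _ => ?_
  split_ifs
  · exact tendsto_const_nhds
  · exact tendsto_inv_atTop_zero

lemma killedKernel_eq_phat (hF : F ⊆ G.edgeFinset) (hδ : 0 < δ) (hxy : s(x, y) ∈ F) :
    killedKernel G δ F x y = phat G δ F x y := by
  have htotal : ∑ z ∈ G.neighborFinset x, gw δ F s(x, z) = δ * normWeight G δ F x := by
    rw [normWeight, Finset.mul_sum]
    refine Finset.sum_congr rfl fun z _ => ?_
    rw [gw, mul_ite, mul_one, mul_inv_cancel₀ hδ.ne']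
  have hadj : G.Adj x y := by simpa using hF hxy
  rw [killedKernel, phat, if_pos hadj, htotal, gw, if_pos hxy, edgeMatrix_of_mem hxy,
    div_mul_cancel_left₀ hδ.ne', one_div]

lemma killedKernel_nonneg (hδ : 0 < δ) (x y : V) : 0 ≤ killedKernel G δ F x y :=
  div_nonneg (edgeMatrix_nonneg F x y) (normWeight_nonneg hδ)

lemma sum_killedKernel_le_one (hF : F ⊆ G.edgeFinset) (hδ : 0 < δ) (x : V) :
    ∑ y, killedKernel G δ F x y ≤ 1 := by
  simp only [killedKernel, ← Finset.sum_div]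
  exact div_le_one_of_le₀ (sum_edgeMatrix_le_normWeight hF hδ x) (normWeight_nonneg hδ)

lemma killedKernel_pos (hF : F ⊆ G.edgeFinset) (hδ : 0 < δ) (hxy : s(x, y) ∈ F) :
    0 < killedKernel G δ F x y := by
  rw [killedKernel, edgeMatrix_of_mem hxy]
  exact one_div_pos.2 (normWeight_pos hF hδ (memVerts_left hxy))

namespace IsAdmissible

lemma eq_zero_of_killedKernel_eq_zero (h : IsAdmissible F ν q) (hF : F ⊆ G.edgeFinset)
    (hδ : 0 < δ) (x y : V) (hxy : killedKernel G δ F x y = 0) : q x y = 0 :=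
  not_not.1 fun hq => (killedKernel_pos hF hδ (h.mem_TE.2.2 x y hq)).ne' hxy

lemma relEntInt_phat (h : IsAdmissible F ν q) (hF : F ⊆ G.edgeFinset) (hδ : 0 < δ) :
    relEntInt ν.1 q (phat G δ F) = (entropyRate ν.1 q (killedKernel G δ F) : EReal) := by
  have heq (x y : V) (hq : q x y ≠ 0) : killedKernel G δ F x y = phat G δ F x y :=
    killedKernel_eq_phat hF hδ (h.mem_TE.2.2 x y hq)
  rw [entropyRate_congr heq]
  refine relEntInt_eq_coe_entropyRate fun x y hxy => not_not.1 fun hq => hq ?_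
  exact h.eq_zero_of_killedKernel_eq_zero hF hδ x y ((heq x y hq).trans hxy)

lemma entropyRate_killedKernel_nonneg (h : IsAdmissible F ν q) (hF : F ⊆ G.edgeFinset)
    (hδ : 0 < δ) : 0 ≤ entropyRate ν.1 q (killedKernel G δ F) :=
  h.isStationaryChain.entropyRate_nonneg (killedKernel_nonneg hδ)
    (h.eq_zero_of_killedKernel_eq_zero hF hδ) (sum_killedKernel_le_one hF hδ)

/-- The parameter `δ` enters only through `normWeight`. -/
lemma entropyRate_killedKernel (h : IsAdmissible F ν q) (hF : F ⊆ G.edgeFinset) (hδ : 0 < δ) :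
    entropyRate ν.1 q (killedKernel G δ F) =
      entropyRate ν.1 q (edgeMatrix F) + ∑ x, ν.1 x * Real.log (normWeight G δ F x) := by
  simp only [entropyRate, ← Finset.sum_add_distrib]
  refine Finset.sum_congr rfl fun x _ => ?_
  by_cases hx : ν.1 x = 0
  · simp only [hx, zero_mul, add_zero]
  have entry (y : V) : q x y * Real.log (q x y / killedKernel G δ F x y) =
      q x y * Real.log (q x y / edgeMatrix F x y) + q x y * Real.log (normWeight G δ F x) := by
    by_cases hq : q x y = 0
    · simp only [hq, zero_mul, add_zero]
    have hxy := h.mem_TE.2.2 x y hq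
    rw [killedKernel, edgeMatrix_of_mem hxy, div_one, div_div_eq_mul_div, div_one,
      Real.log_mul hq (normWeight_pos hF hδ (memVerts_left hxy)).ne', mul_add]
  rw [Finset.sum_congr rfl fun y _ => entry y, Finset.sum_add_distrib, ← Finset.sum_mul,
    h.isStationaryChain.sum_kernel x hx, one_mul, mul_add]

lemma mul_log_normWeight_anti (h : IsAdmissible F ν q) (hF : F ⊆ G.edgeFinset) (ha : 0 < a)
    (hab : a ≤ b) (x : V) :
    ν.1 x * Real.log (normWeight G b F x) ≤ ν.1 x * Real.log (normWeight G a F x) := by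
  by_cases hx : ν.1 x = 0
  · simp only [hx, zero_mul, le_refl]
  have hw := normWeight_pos hF (ha.trans_le hab) (h.memVerts_of_ne_zero x hx)
  exact mul_le_mul_of_nonneg_left (Real.log_le_log hw (normWeight_anti ha hab)) (ν.2.1 x)

lemma entropyRate_anti (h : IsAdmissible F ν q) (hF : F ⊆ G.edgeFinset) (ha : 0 < a)
    (hab : a ≤ b) :
    entropyRate ν.1 q (killedKernel G b F) ≤ entropyRate ν.1 q (killedKernel G a F) := by
  rw [h.entropyRate_killedKernel hF ha, h.entropyRate_killedKernel hF (ha.trans_le hab)]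
  exact add_le_add_right (Finset.sum_le_sum fun x _ => h.mul_log_normWeight_anti hF ha hab x) _

lemma entropyRate_lt (h : IsAdmissible F ν q) (hF : F ⊆ G.edgeFinset) (ha : 0 < a)
    (hab : a < b) (hx : ν.1 x ≠ 0) (hxy : G.Adj x y) (hy : s(x, y) ∉ F) :
    entropyRate ν.1 q (killedKernel G b F) < entropyRate ν.1 q (killedKernel G a F) := by
  have hb := ha.trans hab
  have hw := normWeight_pos hF hb (h.memVerts_of_ne_zero x hx)
  rw [h.entropyRate_killedKernel hF ha, h.entropyRate_killedKernel hF hb]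
  refine add_lt_add_right (Finset.sum_lt_sum
    (fun z _ => h.mul_log_normWeight_anti hF ha hab.le z) ⟨x, Finset.mem_univ x, ?_⟩) _
  exact mul_lt_mul_of_pos_left (Real.log_lt_log hw (normWeight_lt ha hab hxy hy))
    ((ν.2.1 x).lt_of_ne' hx)

lemma entropyRate_le_add_log (h : IsAdmissible F ν q) (hF : F ⊆ G.edgeFinset) (ha : 0 < a)
    (hab : a ≤ b) :
    entropyRate ν.1 q (killedKernel G a F) ≤
      entropyRate ν.1 q (killedKernel G b F) + (Real.log b - Real.log a) := by
  have hb := ha.trans_le hab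
  have hlog (x : V) : ν.1 x * Real.log (normWeight G a F x) ≤
      ν.1 x * Real.log (normWeight G b F x) + ν.1 x * (Real.log b - Real.log a) := by
    by_cases hx : ν.1 x = 0
    · simp only [hx, zero_mul, add_zero, le_refl]
    have hwa := normWeight_pos hF ha (h.memVerts_of_ne_zero x hx)
    have hwb := normWeight_pos hF hb (h.memVerts_of_ne_zero x hx)
    rw [← mul_add, add_comm, ← Real.log_div hb.ne' ha.ne', ← Real.log_mul (by positivity) hwb.ne']
    exact mul_le_mul_of_nonneg_left (Real.log_le_log hwa (normWeight_le_div_mul ha hab)) (ν.2.1 x)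
  have total := Finset.sum_le_sum fun x (_ : x ∈ Finset.univ) => hlog x
  rw [Finset.sum_add_distrib, ← Finset.sum_mul, ν.2.2, one_mul] at total
  rw [h.entropyRate_killedKernel hF ha, h.entropyRate_killedKernel hF hb]
  linarith

end IsAdmissible

end KilledWalk

/-! ### Connected edge sets -/

section ConnectedEdgeSets

variable {V : Type} [Fintype V] {G : SimpleGraph V} [DecidableRel G.Adj] {F : Finset (Sym2 V)}
  {v₁ : V}

lemma exists_adj_notMem (hG : G.Connected) (hF : F ∈ scrS G v₁) (hne : F ≠ G.edgeFinset) :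
    ∃ x y, memVerts F x ∧ G.Adj x y ∧ s(x, y) ∉ F := by
  by_contra! hclosed
  refine hne (hF.1.antisymm ?_)
  have hverts (x : V) : memVerts F x := of_reachable_of_forall_adj
    (fun x y hxy hx => memVerts_right (hclosed x y hx hxy)) (hG.preconnected v₁ x) hF.2.1
  rintro ⟨x, y⟩ hxy
  exact hclosed x y (hverts x) (by simpa using hxy)

lemma nonempty_of_mem_scrS (hF : F ∈ scrS G v₁) : F.Nonempty := by
  obtain ⟨e, he, -⟩ := hF.2.1
  exact ⟨e, he⟩

lemma forall_memVerts_of_forall_mem (hF : F ∈ scrS G v₁) {P : V → Prop}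
    (hstep : ∀ x y, s(x, y) ∈ F → P x → P y) {x : V} (hx : memVerts F x) (hPx : P x)
    (y : V) (hy : memVerts F y) : P y :=
  of_reachable_of_forall_adj
    (fun x y hxy => hstep x y (by simpa using ((SimpleGraph.fromEdgeSet_adj _).1 hxy).1))
    (hF.2.2 x y hx hy) hPx

lemma singleton_mem_scrS {y : V} (hy : G.Adj v₁ y) : {s(v₁, y)} ∈ scrS G v₁ := by
  have hedge : (SimpleGraph.fromEdgeSet ({s(v₁, y)} : Set (Sym2 V))).Adj v₁ y := by
    simp [hy.ne]
  have hreach (x : V) (hx : memVerts {s(v₁, y)} x) :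
      (SimpleGraph.fromEdgeSet ({s(v₁, y)} : Set (Sym2 V))).Reachable v₁ x := by
    obtain rfl | rfl : x = v₁ ∨ x = y := by simpa [memVerts] using hx
    exacts [.refl _, hedge.reachable]
  refine ⟨by simpa using hy, ⟨_, Finset.mem_singleton_self _, Sym2.mem_mk_left _ _⟩, ?_⟩
  rw [Finset.coe_singleton]
  exact fun x z hx hz => (hreach x hx).symm.trans (hreach z hz)

lemma singleton_ne_edgeFinset (hG : G.Connected) (hV : 3 ≤ Fintype.card V) (e : Sym2 V) :
    {e} ≠ G.edgeFinset := by
  intro h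
  have hcard := hG.card_vert_le_card_edgeSet_add_one
  rw [Nat.card_eq_fintype_card, Nat.card_eq_fintype_card, ← SimpleGraph.edgeFinset_card, ← h,
    Finset.card_singleton] at hcard
  lia

lemma nonempty_scrS_diff (hG : G.Connected) (hV : 3 ≤ Fintype.card V) (v₁ : V) :
    (scrS G v₁ \ {G.edgeFinset}).Nonempty := by
  have : Nontrivial V := Fintype.one_lt_card_iff_nontrivial.1 (by lia)
  obtain ⟨y, hy⟩ := hG.preconnected.exists_adj_of_nontrivial v₁
  exact ⟨{s(v₁, y)}, singleton_mem_scrS hy, singleton_ne_edgeFinset hG hV _⟩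

end ConnectedEdgeSets

/-! ### Minimising walks -/

section MinimizingWalk

open Matrix

variable {V : Type} [Fintype V] [DecidableEq V] {G : SimpleGraph V} [DecidableRel G.Adj]
  {F : Finset (Sym2 V)} {δ : ℝ} {v₁ : V}

lemma forall_memVerts_pos_of_edgeMatrix_mulVec (hF : F ∈ scrS G v₁) {u : V → ℝ} (hu : 0 ≤ u)
    (hne : edgeMatrix F *ᵥ u ≠ 0) (hzero : ∀ x, u x = 0 → (edgeMatrix F *ᵥ u) x = 0) (x : V)
    (hx : memVerts F x) : 0 < u x := by
  obtain ⟨y, hy, huy⟩ : ∃ y, memVerts F y ∧ u y ≠ 0 := by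
    obtain ⟨z, hz⟩ := Function.ne_iff.1 hne
    obtain ⟨y, -, hy⟩ := Finset.exists_ne_zero_of_sum_ne_zero hz
    exact ⟨y, memVerts_right (edgeMatrix_ne_zero.1 (left_ne_zero_of_mul hy)),
      right_ne_zero_of_mul hy⟩
  refine forall_memVerts_of_forall_mem hF (P := fun z => 0 < u z) (fun z t hzt hz => ?_) hy
    ((hu y).lt_of_ne' huy) x hx
  have hterm : u z ≤ (edgeMatrix F *ᵥ u) t := by
    have := Finset.single_le_sum (f := fun z => edgeMatrix F t z * u z)
      (fun z _ => mul_nonneg (edgeMatrix_nonneg F t z) (hu z)) (Finset.mem_univ z)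
    rwa [edgeMatrix_of_mem (Sym2.eq_swap ▸ hzt), one_mul] at this
  exact (hu t).lt_of_ne' fun hut => (hz.trans_le hterm).ne' (hzero t hut)

theorem exists_pos_eigenvector_killedKernel (hF : F ∈ scrS G v₁) (hδ : 0 < δ) :
    ∃ (l : ℝ) (u : V → ℝ), 0 < l ∧ (∀ x, 0 ≤ u x) ∧ (∀ x, memVerts F x → 0 < u x) ∧
      ∀ x, memVerts F x → ∑ y, killedKernel G δ F x y * u y = l * u x := by
  obtain ⟨⟨x₀, y₀⟩, h₀⟩ := nonempty_of_mem_scrS hF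
  obtain ⟨l, u, hl, hu, hne, heig⟩ := exists_nonneg_weighted_eigenvector (isSymm_edgeMatrix F)
    (edgeMatrix_nonneg F) ⟨x₀, y₀, by simp [edgeMatrix_of_mem h₀]⟩
    (fun x y hxy => normWeight_pos hF.1 hδ (memVerts_left (edgeMatrix_ne_zero.1 hxy)))
  have hrow (x : V) : (edgeMatrix F *ᵥ u) x = l * (normWeight G δ F x * u x) := congrFun heig x
  refine ⟨l, u, hl, hu, forall_memVerts_pos_of_edgeMatrix_mulVec hF hu hne fun x hx => ?_,
    fun x hx => ?_⟩
  · rw [hrow, hx, mul_zero, mul_zero]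
  · simp only [killedKernel, div_mul_eq_mul_div, ← Finset.sum_div]
    rw [div_eq_iff (normWeight_pos hF.1 hδ hx).ne', mul_assoc, mul_comm (u x), ← hrow]
    rfl

/-- The walk is the Doob transform of the killed walk by its Perron eigenvector `u`, which is
reversible with conductances `u x * u y` on the edges of `F`. -/
lemma exists_isAdmissible_entropyRate_eq_neg_log {l : ℝ} {u : V → ℝ} (hF : F ⊆ G.edgeFinset)
    (hne : F.Nonempty) (hδ : 0 < δ) (hl : 0 < l) (hu : ∀ x, 0 ≤ u x)
    (hu_pos : ∀ x, memVerts F x → 0 < u x)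
    (heig : ∀ x, memVerts F x → ∑ y, killedKernel G δ F x y * u y = l * u x) :
    ∃ ν q, IsAdmissible F ν q ∧ (∀ x, memVerts F x → ν.1 x ≠ 0) ∧
      entropyRate ν.1 q (killedKernel G δ F) = -Real.log l := by
  let c (x y : V) : ℝ := u x * edgeMatrix F x y * u y
  have hsupp (x y : V) : c x y ≠ 0 ↔ s(x, y) ∈ F := by
    rw [← edgeMatrix_ne_zero]
    refine ⟨fun h => right_ne_zero_of_mul (left_ne_zero_of_mul h), fun h => ?_⟩
    have hxy := edgeMatrix_ne_zero.1 h
    exact mul_ne_zero (mul_ne_zero (hu_pos x (memVerts_left hxy)).ne' h)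
      (hu_pos y (memVerts_right hxy)).ne'
  obtain ⟨ν, hadm, hfull⟩ := exists_isAdmissible_conductanceKernel (c := c)
    (fun x y => mul_nonneg (mul_nonneg (hu x) (edgeMatrix_nonneg F x y)) (hu y))
    (fun x y => by simp only [c, (isSymm_edgeMatrix F).apply x y]; ring) hsupp hne
  refine ⟨ν, conductanceKernel c, hadm, hfull, hadm.isStationaryChain.entropyRate_eq_neg_log
    (fun x hx => hu_pos x (hadm.memVerts_of_ne_zero x hx)) hl fun x y hq => ?_⟩
  have hxy := hadm.mem_TE.2.2 x y hq
  have hx := memVerts_left hxy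
  have hux := hu_pos x hx
  have hw := normWeight_pos hF hδ hx
  have hsum : ∑ z, c x z = u x * normWeight G δ F x * (l * u x) := by
    rw [← heig x hx, Finset.mul_sum]
    refine Finset.sum_congr rfl fun z _ => ?_
    simp only [c, killedKernel]
    field_simp
  rw [conductanceKernel, hsum, killedKernel]
  simp only [c, edgeMatrix_of_mem hxy]
  field_simp

theorem exists_isAdmissible_forall_entropyRate_le (hF : F ∈ scrS G v₁) (hδ : 0 < δ) :
    ∃ ν q, IsAdmissible F ν q ∧ (∀ x, memVerts F x → ν.1 x ≠ 0) ∧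
      ∀ ν' q', IsAdmissible F ν' q' → entropyRate ν.1 q (killedKernel G δ F) ≤
        entropyRate ν'.1 q' (killedKernel G δ F) := by
  obtain ⟨l, u, hl, hu, hu_pos, heig⟩ := exists_pos_eigenvector_killedKernel hF hδ
  obtain ⟨ν, q, hadm, hfull, hrate⟩ := exists_isAdmissible_entropyRate_eq_neg_log hF.1
    (nonempty_of_mem_scrS hF) hδ hl hu hu_pos heig
  refine ⟨ν, q, hadm, hfull, fun ν' q' h' => hrate.trans_le ?_⟩
  exact h'.isStationaryChain.neg_log_le_entropyRate (killedKernel_nonneg hδ)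
    (h'.eq_zero_of_killedKernel_eq_zero hF.1 hδ) hu
    (fun x hx => hu_pos x (h'.memVerts_of_ne_zero x hx)) hl
    fun x hx => (heig x (h'.memVerts_of_ne_zero x hx)).le

/-- The killed walks converge to simple random walk on `F`, which is the pair constructed here. -/
lemma exists_isAdmissible_tendsto_entropyRate_zero (hF : F ∈ scrS G v₁) :
    ∃ ν q, IsAdmissible F ν q ∧
      Tendsto (fun δ => entropyRate ν.1 q (killedKernel G δ F)) atTop (𝓝 0) := by
  obtain ⟨ν, hadm, -⟩ := exists_isAdmissible_conductanceKernel (edgeMatrix_nonneg F)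
    (fun x y => (isSymm_edgeMatrix F).apply y x) (fun _ _ => edgeMatrix_ne_zero)
    (nonempty_of_mem_scrS hF)
  set q := conductanceKernel (edgeMatrix F)
  refine ⟨ν, q, hadm, ?_⟩
  have entry (x y : V) : Tendsto (fun δ => q x y * Real.log (q x y / killedKernel G δ F x y))
      atTop (𝓝 0) := by
    by_cases hq : q x y = 0
    · simp only [hq, zero_mul, tendsto_const_nhds_iff]
    have hlim : Tendsto (fun δ => killedKernel G δ F x y) atTop (𝓝 (q x y)) :=
      tendsto_const_nhds.div (tendsto_normWeight hF.1 x)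
        fun h0 => hq (div_eq_zero_iff.2 (.inr h0))
    have hlog : Tendsto (fun δ => Real.log (q x y / killedKernel G δ F x y)) atTop
        (𝓝 (Real.log (q x y / q x y))) :=
      (tendsto_const_nhds.div hlim hq).log (div_ne_zero hq hq)
    simpa only [div_self hq, Real.log_one, mul_zero] using hlog.const_mul (q x y)
  simpa only [entropyRate, Finset.sum_const_zero, mul_zero] using
    tendsto_finsetSum Finset.univ fun x _ =>
      (tendsto_finsetSum Finset.univ fun y _ => entry x y).const_mul (ν.1 x)

end MinimizingWalk

/-! ### The critical exponent -/

section CriticalExponent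

variable {V : Type} [Fintype V] [DecidableEq V] {G : SimpleGraph V} [DecidableRel G.Adj]
  {F : Finset (Sym2 V)} {S0 : Set (Finset (Sym2 V))} {δ a b : ℝ} {v₁ : V} {ν : ProbMeas V}
  {q : V → V → ℝ}

lemma alphaC_le_entropyRate (hF : F ⊆ G.edgeFinset) (hFS : F ∈ S0) (hδ : 0 < δ)
    (h : IsAdmissible F ν q) :
    alphaC G δ S0 ≤ (entropyRate ν.1 q (killedKernel G δ F) : EReal) :=
  sInf_le ⟨ν, F, q, hFS, h.mem_TE, h.memVerts_of_ne_zero, h.invariant,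
    (h.relEntInt_phat hF hδ).symm⟩

theorem exists_alphaC_eq_entropyRate (hS : S0 ⊆ scrS G v₁) (hne : S0.Nonempty) (hδ : 0 < δ) :
    ∃ F ∈ S0, ∃ ν q, IsAdmissible F ν q ∧ (∀ x, memVerts F x → ν.1 x ≠ 0) ∧
      alphaC G δ S0 = (entropyRate ν.1 q (killedKernel G δ F) : EReal) := by
  have hopt (F : S0) := exists_isAdmissible_forall_entropyRate_le (hS F.2) hδ
  choose ν q hadm hfull hmin using hopt
  have : Nonempty S0 := hne.to_subtype
  obtain ⟨F, hF_min⟩ := Finite.exists_min fun F : S0 =>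
    entropyRate (ν F).1 (q F) (killedKernel G δ F)
  refine ⟨F, F.2, ν F, q F, hadm F, hfull F,
    (alphaC_le_entropyRate (hS F.2).1 F.2 hδ (hadm F)).antisymm (le_sInf ?_)⟩
  rintro _ ⟨ν', F', q', hF', hTE, hsupp, hinv, rfl⟩
  have hadm' : IsAdmissible F' ν' q' := ⟨hTE, hsupp, hinv⟩
  rw [hadm'.relEntInt_phat (hS hF').1 hδ, EReal.coe_le_coe_iff]
  exact (hF_min ⟨F', hF'⟩).trans (hmin ⟨F', hF'⟩ ν' q' hadm')

lemma toReal_alphaC_le_entropyRate (hS : S0 ⊆ scrS G v₁) (hF : F ∈ S0) (hδ : 0 < δ)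
    (h : IsAdmissible F ν q) :
    (alphaC G δ S0).toReal ≤ entropyRate ν.1 q (killedKernel G δ F) := by
  have hle := alphaC_le_entropyRate (hS hF).1 hF hδ h
  obtain ⟨F', -, ν', q', -, -, heq⟩ := exists_alphaC_eq_entropyRate hS ⟨F, hF⟩ hδ
  rw [heq] at hle ⊢
  exact EReal.coe_le_coe_iff.1 hle

lemma toReal_alphaC_nonneg (hS : S0 ⊆ scrS G v₁) (hne : S0.Nonempty) (hδ : 0 < δ) :
    0 ≤ (alphaC G δ S0).toReal := by
  obtain ⟨F, hF, ν, q, hadm, -, heq⟩ := exists_alphaC_eq_entropyRate hS hne hδ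
  rw [heq, EReal.toReal_coe]
  exact hadm.entropyRate_killedKernel_nonneg (hS hF).1 hδ

lemma toReal_alphaC_anti (hS : S0 ⊆ scrS G v₁) (hne : S0.Nonempty) (ha : 0 < a) (hab : a ≤ b) :
    (alphaC G b S0).toReal ≤ (alphaC G a S0).toReal := by
  obtain ⟨F, hF, ν, q, hadm, -, heq⟩ := exists_alphaC_eq_entropyRate hS hne ha
  rw [heq, EReal.toReal_coe]
  exact (toReal_alphaC_le_entropyRate hS hF (ha.trans_le hab) hadm).trans
    (hadm.entropyRate_anti (hS hF).1 ha hab)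

lemma toReal_alphaC_le_add_log (hS : S0 ⊆ scrS G v₁) (hne : S0.Nonempty) (ha : 0 < a)
    (hab : a ≤ b) :
    (alphaC G a S0).toReal ≤ (alphaC G b S0).toReal + (Real.log b - Real.log a) := by
  obtain ⟨F, hF, ν, q, hadm, -, heq⟩ := exists_alphaC_eq_entropyRate hS hne (ha.trans_le hab)
  rw [heq, EReal.toReal_coe]
  exact (toReal_alphaC_le_entropyRate hS hF ha hadm).trans
    (hadm.entropyRate_le_add_log (hS hF).1 ha hab)

theorem strictAntiOn_toReal_alphaC (hG : G.Connected) (hS : S0 ⊆ scrS G v₁) (hne : S0.Nonempty)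
    (hE : G.edgeFinset ∉ S0) :
    StrictAntiOn (fun d => (alphaC G d S0).toReal) (Set.Ioi 0) := by
  intro a (ha : 0 < a) b (hb : 0 < b) hab
  obtain ⟨F, hF, ν, q, hadm, hfull, heq⟩ := exists_alphaC_eq_entropyRate hS hne ha
  obtain ⟨x, y, hx, hxy, hy⟩ := exists_adj_notMem hG (hS hF) fun h => hE (h ▸ hF)
  simp only [heq, EReal.toReal_coe]
  exact (toReal_alphaC_le_entropyRate hS hF hb hadm).trans_lt
    (hadm.entropyRate_lt (hS hF).1 ha hab (hfull x hx) hxy hy)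

theorem lipschitzWith_toReal_alphaC_exp (hS : S0 ⊆ scrS G v₁) (hne : S0.Nonempty) :
    LipschitzWith 1 fun t => (alphaC G (Real.exp t) S0).toReal := by
  refine LipschitzWith.of_le_add fun s t => ?_
  rcases le_total s t with hst | hts
  · have hle := toReal_alphaC_le_add_log hS hne s.exp_pos (Real.exp_le_exp.2 hst)
    rwa [Real.log_exp, Real.log_exp, ← abs_of_nonneg (sub_nonneg.2 hst), ← Real.dist_eq,
      dist_comm] at hle
  · exact (toReal_alphaC_anti hS hne t.exp_pos (Real.exp_le_exp.2 hts)).trans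
      (le_add_of_nonneg_right dist_nonneg)

lemma lipschitzOnWith_log_Ici {r : ℝ} (hr : 0 < r) :
    LipschitzOnWith (Real.toNNReal r⁻¹) Real.log (Set.Ici r) := by
  refine LipschitzOnWith.of_le_add_mul _ fun s (hs : r ≤ s) t (ht : r ≤ t) => ?_
  have ht0 := hr.trans_le ht
  rw [Real.coe_toNNReal _ (inv_pos.2 hr).le, ← sub_le_iff_le_add', ← Real.log_div
    (hr.trans_le hs).ne' ht0.ne']
  calc Real.log (s / t) ≤ s / t - 1 := Real.log_le_sub_one_of_pos (div_pos (hr.trans_le hs) ht0)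
    _ = t⁻¹ * (s - t) := by field_simp
    _ ≤ t⁻¹ * dist s t := by gcongr; exact le_abs_self _
    _ ≤ r⁻¹ * dist s t := by gcongr

lemma eqOn_toReal_alphaC_comp_log :
    Set.EqOn ((fun t => (alphaC G (Real.exp t) S0).toReal) ∘ Real.log)
      (fun d => (alphaC G d S0).toReal) (Set.Ioi 0) :=
  fun d (hd : 0 < d) => by simp only [Function.comp_apply, Real.exp_log hd]

theorem uniformContinuousOn_toReal_alphaC (hS : S0 ⊆ scrS G v₁) (hne : S0.Nonempty) {r : ℝ}
    (hr : 0 < r) : UniformContinuousOn (fun d => (alphaC G d S0).toReal) (Set.Ici r) := by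
  have hlip := (lipschitzWith_toReal_alphaC_exp hS hne).comp_lipschitzOnWith
    (lipschitzOnWith_log_Ici hr)
  exact hlip.uniformContinuousOn.congr fun d hd => eqOn_toReal_alphaC_comp_log (hr.trans_le hd)

theorem continuousOn_toReal_alphaC (hS : S0 ⊆ scrS G v₁) (hne : S0.Nonempty) :
    ContinuousOn (fun d => (alphaC G d S0).toReal) (Set.Ioi 0) :=
  ((lipschitzWith_toReal_alphaC_exp hS hne).continuous.comp_continuousOn
    (Real.continuousOn_log.mono fun _ hd => (Set.mem_Ioi.1 hd).ne')).congr
    eqOn_toReal_alphaC_comp_log.symm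

theorem tendsto_toReal_alphaC_atTop (hS : S0 ⊆ scrS G v₁) (hne : S0.Nonempty) :
    Tendsto (fun d => (alphaC G d S0).toReal) atTop (𝓝 0) := by
  obtain ⟨F, hF⟩ := hne
  obtain ⟨ν, q, hadm, hlim⟩ := exists_isAdmissible_tendsto_entropyRate_zero (hS hF)
  refine tendsto_of_tendsto_of_tendsto_of_le_of_le' tendsto_const_nhds hlim ?_ ?_
  · filter_upwards [eventually_gt_atTop 0] with d hd
    exact toReal_alphaC_nonneg hS ⟨F, hF⟩ hd
  · filter_upwards [eventually_gt_atTop 0] with d hd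
    exact toReal_alphaC_le_entropyRate hS hF hd hadm

end CriticalExponent

/-- `δ ↦ α_c^1(δ)` is continuous and strictly decreasing on `(0, ∞)`,
uniformly continuous on `[δ₀, ∞)` for every `δ₀ > 0`, and tends to `0` at `∞`. -/
theorem orrw_cover_exponent_regularity {V : Type} [Fintype V] [DecidableEq V]
    (G : SimpleGraph V) [DecidableRel G.Adj] (hG : G.Connected)
    (hV : 3 ≤ Fintype.card V) (v₁ : V) :
    StrictAntiOn (fun d : ℝ => (alphaC1 G v₁ d).toReal) (Set.Ioi 0) ∧
    ContinuousOn (fun d : ℝ => (alphaC1 G v₁ d).toReal) (Set.Ioi 0) ∧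
    (∀ δ₀ : ℝ, 0 < δ₀ →
      UniformContinuousOn (fun d : ℝ => (alphaC1 G v₁ d).toReal) (Set.Ici δ₀)) ∧
    Tendsto (fun d : ℝ => (alphaC1 G v₁ d).toReal) atTop (nhds 0) := by
  have hS : scrS G v₁ \ {G.edgeFinset} ⊆ scrS G v₁ := Set.sdiff_subset
  have hne := nonempty_scrS_diff hG hV v₁
  exact ⟨strictAntiOn_toReal_alphaC hG hS hne fun h => h.2 rfl,
    continuousOn_toReal_alphaC hS hne,
    fun _ hδ₀ => uniformContinuousOn_toReal_alphaC hS hne hδ₀,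
    tendsto_toReal_alphaC_atTop hS hne⟩

end ORRW
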